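/- Let V be a finite-dimensional complex vector space with two Lie brackets [·,·] and {·,·}, giving Lie algebras 𝔤 = (V,[·,·]) and 𝔫 = (V,{·,·}). If 𝔤 is semisimple and 𝔫 is perfect but not semisimple, then there is no post-Lie algebra structure on (𝔤,𝔫). -/

import Mathlib

/-!
Write `x·y = P x y`. Left multiplications are derivations of `𝔫` and represent `𝔤`, so there is a
semidirect sum `E = 𝔫 ⋊ 𝔤`, and both `i x = (0, x)` and `j x = (σ x, x)` are Lie algebra homomorphisms
`𝔤 → E` (`graphHom`). Since `𝔤` and `𝔫` are perfect, so is `E`; hence its radical `r` acts nilpotently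
(`isNilpotent_ad_of_mem_radical`). As `𝔤` is semisimple, `r` is contained in `𝔫`.

By the theorems of Levi and Malcev (`exists_levi_section`, `malcev_conjugacy`, both deduced from
Whitehead's lemmas), there is one `v ∈ r` such that `j w = exp (ad v) (i w)` whenever `σ w ∈ r`
(`exists_conj`). For such `w`, `(σ w, 0) = j w - i w = φ(ad v) ⁅v, i w⁆ = -φ(ad v) (w·v)` with
`φ(t) = (exp t - 1) / t`, so on `r` right multiplication by `v` is the negative of the inverse of a
unipotent map. It maps everything into the ideal `r`, so its trace is `-dim r` (`trace_of_exp_eq`).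

On the other hand `w·v = v·w - [v, w] + {v, w}`, and each of the three operators in `w` on the right is
traceless, because `𝔤` and `𝔫` are perfect. Thus `r = 0`, so `E` is semisimple, and so is its ideal `𝔫`
(`hasTrivialRadical_of_ideal`), contrary to assumption.
-/

open LieAlgebra LieAlgebra.SpecialLinear

/-- A post-Lie algebra structure on a pair of Lie algebras `(𝔤, 𝔫)` sharing the same
underlying vector space.  Here the common underlying space is identified via the linear
equivalence `σ : G ≃ₗ[ℂ] N`, so that the bracket of `𝔤` is `⁅x, y⁆` in `G` and the bracket
of `𝔫` is `σ.symm ⁅σ x, σ y⁆`, and the bilinear product is `P`. -/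
structure IsPostLieStructure {G N : Type*} [LieRing G] [LieAlgebra ℂ G]
    [LieRing N] [LieAlgebra ℂ N] (σ : G ≃ₗ[ℂ] N) (P : G →ₗ[ℂ] G →ₗ[ℂ] G) : Prop where
  diff_eq : ∀ x y : G, P x y - P y x = ⁅x, y⁆ - σ.symm ⁅σ x, σ y⁆
  rep : ∀ x y z : G, P ⁅x, y⁆ z = P x (P y z) - P y (P x z)
  der : ∀ x y z : G, P x (σ.symm ⁅σ y, σ z⁆) =
      σ.symm ⁅σ (P x y), σ z⁆ + σ.symm ⁅σ y, σ (P x z)⁆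

open LieAlgebra LieModule Module

universe w

namespace PostLie

/-! ### Semisimple Lie algebras: perfectness and Casimir elements -/

section
variable {K Q M : Type*} [Field K] [CharZero K] [LieRing Q] [LieAlgebra K Q] [Module.Finite K Q] [HasTrivialRadical K Q] [AddCommGroup M] [Module K M] [LieRingModule Q M] [LieModule K Q M] [Module.Finite K M]

/-- Ideals of a semisimple Lie algebra are perfect: the part of `J` Killing-orthogonal to `⁅J, J⁆` is
an abelian ideal, hence zero. -/
lemma perfect_ideal (J : LieIdeal K Q) : ⁅J, J⁆ = J := by
  have hc := LieIdeal.isCompl_killingCompl (K := K) (L := Q) ⁅J, J⁆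
  set D : LieIdeal K Q := ⁅J, J⁆
  have hD : D ≤ J := LieSubmodule.lie_le_left J J
  have h1 : D ⊔ (D.killingCompl ⊓ J) = J := by
    rw [← sup_inf_assoc_of_le _ hD, hc.sup_eq_top, top_inf_eq]
  have h2 : (D.killingCompl ⊓ J) = ⊥ := by
    have : IsLieAbelian (D.killingCompl ⊓ J : LieIdeal K Q) := by
      rw [LieSubmodule.lie_abelian_iff_lie_self_eq_bot, eq_bot_iff, ← hc.inf_eq_bot]
      exact le_inf (LieSubmodule.mono_lie inf_le_right inf_le_right)
        ((LieSubmodule.lie_le_left _ _).trans inf_le_left)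
    exact IsKilling.ideal_eq_bot_of_isLieAbelian _
  rw [← h1, h2, sup_bot_eq]

/-- Perfectness in the form used throughout the file: every element is a linear combination of
brackets. -/
lemma perfect_top (x : Q) : x ∈ Submodule.span K {m | ∃ y z : Q, ⁅y, z⁆ = m} := by
  have h := perfect_ideal (⊤ : LieIdeal K Q)
  have hx : x ∈ (⁅(⊤ : LieIdeal K Q), (⊤ : LieIdeal K Q)⁆ : LieIdeal K Q) := by rw [h]; trivial
  rw [← LieSubmodule.mem_toSubmodule, LieSubmodule.lieIdeal_oper_eq_linear_span'] at hx
  refine Submodule.span_mono ?_ hx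
  rintro _ ⟨y, -, z, -, rfl⟩
  exact ⟨y, z, rfl⟩

/-- The radical of the trace form of a module acts trivially on it. By Cartan's criterion that radical
`J` acts nilpotently, and since `J` is perfect, `⁅J, M⁆` lies in every term of the lower central series. -/
lemma lie_eq_zero_of_traceForm (x : Q) (hx : ∀ y, traceForm K Q M x y = 0) (m : M) : ⁅x, m⁆ = 0 := by
  let J : LieIdeal K Q := InvariantForm.orthogonal (traceForm K Q M) (traceForm_lieInvariant K Q M) ⊤
  have hxJ : x ∈ J := by
    rw [InvariantForm.mem_orthogonal]
    intro y _
    rw [traceForm_comm, hx]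
  have h0 : traceForm K J M = 0 := by
    ext ⟨a, ha⟩ ⟨b, hb⟩
    exact (InvariantForm.mem_orthogonal _ _ _ _).1 hb a trivial
  have h1 := isNilpotent_derivedSeries_of_traceForm_eq_zero h0
  have h2 : derivedSeries K J 1 = ⊤ := by
    rw [LieIdeal.derivedSeries_eq_derivedSeriesOfIdeal_comap, derivedSeriesOfIdeal_succ, derivedSeriesOfIdeal_zero, perfect_ideal]
    ext; simp
  have h3 : LieModule.IsNilpotent J M := by
    rw [isNilpotent_iff_forall' (R := K)] at h1 ⊢
    intro y
    exact h1 ⟨y, h2 ▸ LieSubmodule.mem_top y⟩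
  obtain ⟨k, hk⟩ := (LieModule.isNilpotent_iff K J M).1 h3
  have h4 : ∀ k, ⁅J, (⊤ : LieSubmodule K Q M)⁆ ≤ J.lcs M k := by
    intro k
    induction k with
    | zero => simp
    | succ k ih =>
      rw [LieIdeal.lcs_succ]
      conv_lhs => rw [← perfect_ideal J]
      rw [LieSubmodule.lie_le_iff]
      intro y hy m _
      rw [← LieSubmodule.mem_toSubmodule, LieSubmodule.lieIdeal_oper_eq_linear_span'] at hy
      induction hy using Submodule.span_induction with
      | mem y hy =>
        obtain ⟨a, ha, b, hb, rfl⟩ := hy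
        rw [lie_lie]
        exact sub_mem
          (LieSubmodule.lie_mem_lie ha (ih (LieSubmodule.lie_mem_lie hb (LieSubmodule.mem_top m))))
          (LieSubmodule.lie_mem_lie hb (ih (LieSubmodule.lie_mem_lie ha (LieSubmodule.mem_top m))))
      | zero => simp
      | add y z _ _ hy hz => rw [add_lie]; exact add_mem hy hz
      | smul t y _ hy => rw [smul_lie]; exact SMulMemClass.smul_mem t hy
  have h5 : J.lcs M k = ⊥ := by
    rw [← LieSubmodule.toSubmodule_eq_bot, LieIdeal.coe_lcs_eq, hk]; simp
  have := h4 k (LieSubmodule.lie_mem_lie hxJ (LieSubmodule.mem_top m))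
  simpa [h5] using this

/-- The Casimir element of a non-trivial module, as a pair of families `e`, `e'` that are dual bases,
for the trace form, of the Killing complement of the kernel of the action. The first clause is the
invariance of `∑ i, e i ⊗ e' i`, tested on bilinear maps; the second says that the Casimir operator is
nonzero, which holds because its trace is the dimension of that complement. -/
lemma exists_casimir (hM : ∃ x : Q, ∃ m : M, ⁅x, m⁆ ≠ 0) :
    ∃ (n : ℕ) (e e' : Fin n → Q),
      (∀ (x : Q) (β : Q →ₗ[K] Q →ₗ[K] M),
        ∑ i, (β ⁅x, e i⁆ (e' i) + β (e i) ⁅x, e' i⁆) = 0) ∧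
      ∑ i, toEnd K Q M (e i) ∘ₗ toEnd K Q M (e' i) ≠ 0 := by
  set T := traceForm K Q M with hT
  have hsymm : ∀ x y, T x y = T y x := traceForm_comm K Q M
  set I : LieIdeal K Q := LieIdeal.killingCompl K Q (LieModule.ker K Q M) with hI
  have hc := LieIdeal.isCompl_killingCompl (K := K) (L := Q) (LieModule.ker K Q M)
  let B : LinearMap.BilinForm K I := T.compl₁₂ I.toSubmodule.subtype I.toSubmodule.subtype
  have hBapp : ∀ x y : I, B x y = T x y := fun _ _ => rfl
  have hker : ∀ z ∈ LieModule.ker K Q M, ∀ y, T y z = 0 := by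
    intro z hz y
    rw [LieModule.mem_ker] at hz
    have : toEnd K Q M z = 0 := by ext m; simpa using hz m
    rw [hT, traceForm_apply_apply, this, LinearMap.comp_zero, map_zero]
  have hBsymm : B.IsSymm := ⟨fun x y => hsymm _ _⟩
  have hB : B.Nondegenerate := by
    refine hBsymm.isRefl.nondegenerate_iff_separatingLeft.2 ?_
    rintro ⟨x, hx⟩ hx0
    have h1 : ∀ y, T x y = 0 := by
      intro y
      have hy : y ∈ LieModule.ker K Q M ⊔ I := hc.sup_eq_top ▸ LieSubmodule.mem_top y
      obtain ⟨a, ha, b, hb, rfl⟩ := (LieSubmodule.mem_sup _ _ _).1 hy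
      rw [map_add, hker a ha, zero_add]
      exact hx0 ⟨b, hb⟩
    have h2 : x ∈ LieModule.ker K Q M := by
      rw [LieModule.mem_ker]; exact lie_eq_zero_of_traceForm x h1
    have h3 : x ∈ LieModule.ker K Q M ⊓ I := ⟨h2, hx⟩
    rw [hc.inf_eq_bot] at h3
    simpa using h3
  let b := Module.finBasis K I
  let b' := B.dualBasis hB b
  have he : ∀ z ∈ I, z = ∑ j, T z (b' j) • (b j : Q) := by
    intro z hz
    have h := b.sum_repr ⟨z, hz⟩
    have h' := congrArg (Subtype.val) h
    simp only [AddSubmonoidClass.coe_finsetSum, SetLike.val_smul] at h'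
    rw [← h']
    refine Finset.sum_congr rfl fun j _ => ?_
    rw [h', ← hBapp ⟨z, hz⟩]
    conv_rhs => rw [← h]
    rw [map_sum, LinearMap.sum_apply, Finset.sum_eq_single j]
    · rw [map_smul, LinearMap.smul_apply, LinearMap.BilinForm.apply_dualBasis_right hB hBsymm]
      simp
    · intro i _ hij
      rw [map_smul, LinearMap.smul_apply, LinearMap.BilinForm.apply_dualBasis_right hB hBsymm]
      simp [hij]
    · simp
  have he' : ∀ z ∈ I, z = ∑ j, T z (b j) • (b' j : Q) := by
    intro z hz
    have h := b'.sum_repr ⟨z, hz⟩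
    have h' := congrArg (Subtype.val) h
    simp only [AddSubmonoidClass.coe_finsetSum, SetLike.val_smul] at h'
    rw [← h']
    refine Finset.sum_congr rfl fun j _ => ?_
    rw [h', LinearMap.BilinForm.dualBasis_repr_apply, hBapp]
  refine ⟨_, fun i => (b i : Q), fun i => (b' i : Q), ?_, ?_⟩
  · intro x β
    have h1 : ∀ i, β ⁅x, (b i : Q)⁆ (b' i) = ∑ j, T ⁅x, (b i : Q)⁆ (b' j) • β (b j) (b' i) := by
      intro i
      conv_lhs => rw [he _ (I.lie_mem (b i).2)]
      simp
    have h2 : ∀ i, β (b i) ⁅x, (b' i : Q)⁆ = ∑ j, T ⁅x, (b' i : Q)⁆ (b j) • β (b i) (b' j) := by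
      intro i
      conv_lhs => rw [he' _ (I.lie_mem (b' i).2)]
      simp
    rw [Finset.sum_add_distrib, Finset.sum_congr rfl fun i _ => h1 i,
      Finset.sum_congr rfl fun i _ => h2 i, Finset.sum_comm, ← Finset.sum_add_distrib]
    refine Finset.sum_eq_zero fun i _ => ?_
    rw [← Finset.sum_add_distrib]
    refine Finset.sum_eq_zero fun j _ => ?_
    rw [← add_smul]
    have : T ⁅x, (b j : Q)⁆ (b' i) = - T ⁅x, (b' i : Q)⁆ (b j) := by
      rw [← lie_skew, map_neg, LinearMap.neg_apply, traceForm_apply_lie_apply, hsymm]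
    rw [this, neg_add_cancel, zero_smul]
  · intro h0
    have h1 := congrArg (LinearMap.trace K M) h0
    have h2 : ∀ i, LinearMap.trace K M (toEnd K Q M (b i) ∘ₗ toEnd K Q M (b' i)) = 1 := by
      intro i
      rw [← traceForm_apply_apply, ← hT, ← hBapp, LinearMap.BilinForm.apply_dualBasis_right hB hBsymm]
      simp
    rw [map_sum, Finset.sum_congr rfl fun i _ => h2 i] at h1
    simp only [Finset.sum_const, Finset.card_univ, Fintype.card_fin, map_zero, nsmul_eq_mul, mul_one, Nat.cast_eq_zero] at h1
    have h3 : I = ⊥ := by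
      rw [← LieSubmodule.toSubmodule_eq_bot]
      exact Submodule.finrank_eq_zero.1 h1
    rw [← hI, h3] at hc
    have h4 : LieModule.ker K Q M = ⊤ := by simpa using hc.sup_eq_top
    obtain ⟨x, m, hx⟩ := hM
    exact hx ((LieModule.mem_ker K Q M x).1 (h4 ▸ LieSubmodule.mem_top x) m)
end

/-! ### Whitehead's lemmas -/

section
variable {K Q : Type*} [Field K] [LieRing Q] [LieAlgebra K Q]

lemma finrank_quot_lt {M : Type*} [AddCommGroup M] [Module K M] [LieRingModule Q M] [LieModule K Q M] [Module.Finite K M] (W : LieSubmodule K Q M) (hW : W ≠ ⊥) : finrank K (M ⧸ W) < finrank K M := by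
  have h1 := W.toSubmodule.finrank_quotient_add_finrank
  have h2 : finrank K W.toSubmodule ≠ 0 := by
    rw [Ne, Submodule.finrank_eq_zero]; simpa using hW
  change finrank K (M ⧸ W.toSubmodule) < _
  omega

lemma finrank_sub_lt {M : Type*} [AddCommGroup M] [Module K M] [LieRingModule Q M] [LieModule K Q M] [Module.Finite K M] (W : LieSubmodule K Q M) (hW : W ≠ ⊤) : finrank K W < finrank K M := by
  exact Submodule.finrank_lt (s := W.toSubmodule) (by simpa using hW)

lemma exists_quotient_hom {M : Type*} [AddCommGroup M] [Module K M] [LieRingModule Q M]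
    [LieModule K Q M] (W : LieSubmodule K Q M) :
    ∃ p : M →ₗ⁅K,Q⁆ M ⧸ W, Function.Surjective p ∧ ∀ m, p m = 0 ↔ m ∈ W :=
  ⟨LieSubmodule.Quotient.mk' W, LieSubmodule.Quotient.surjective_mk' W, fun _ =>
    LieSubmodule.Quotient.mk_eq_zero'⟩

end

section
variable {K Q : Type*} [Field K] [CharZero K] [LieRing Q] [LieAlgebra K Q] [Module.Finite K Q] [HasTrivialRadical K Q]

section
variable {M : Type*} [AddCommGroup M] [Module K M] [LieRingModule Q M] [LieModule K Q M] [Module.Finite K M]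

/-- The Casimir operator `C` packaged for cohomology computations: invariance is tested on maps
`a ⊗ b ↦ ⁅a, g b⁆`, and `C` commutes with the action. -/
lemma exists_casimir' (hM : ∃ x : Q, ∃ m : M, ⁅x, m⁆ ≠ 0) :
    ∃ (n : ℕ) (e e' : Fin n → Q) (C : M →ₗ[K] M),
      (∀ (x : Q) (g : Q →ₗ[K] M),
        ∑ i, ⁅⁅x, e i⁆, g (e' i)⁆ = - ∑ i, ⁅e i, g ⁅x, e' i⁆⁆) ∧
      (∀ m, C m = ∑ i, ⁅e i, ⁅e' i, m⁆⁆) ∧ (∀ (x : Q) (m : M), C ⁅x, m⁆ = ⁅x, C m⁆) ∧ C ≠ 0 := by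
  obtain ⟨n, e, e', h1, h2⟩ := exists_casimir (K := K) hM
  have h1' : ∀ (x : Q) (g : Q →ₗ[K] M),
        ∑ i, ⁅⁅x, e i⁆, g (e' i)⁆ = - ∑ i, ⁅e i, g ⁅x, e' i⁆⁆ := by
    intro x g
    have := h1 x (LinearMap.mk₂ K (fun a b => ⁅a, g b⁆) (by simp) (by simp) (by simp) (by simp))
    rw [Finset.sum_add_distrib] at this
    exact eq_neg_of_add_eq_zero_left this
  refine ⟨n, e, e', _, h1', fun m => by simp, fun x m => ?_, h2⟩
  have h3 := h1' x (LinearMap.mk (⟨fun y => ⁅y, m⁆, by simp⟩) (by simp))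
  simp only [LinearMap.coe_mk, AddHom.coe_mk] at h3
  simp only [LinearMap.sum_apply, LinearMap.comp_apply, toEnd_apply_apply]
  rw [lie_sum]
  have h4 : ∀ i, ⁅x, ⁅e i, ⁅e' i, m⁆⁆⁆ = ⁅⁅x, e i⁆, ⁅e' i, m⁆⁆ + ⁅e i, ⁅⁅x, e' i⁆, m⁆⁆
      + ⁅e i, ⁅e' i, ⁅x, m⁆⁆⁆ := by
    intro i
    rw [leibniz_lie x (e i), leibniz_lie x (e' i), lie_add, add_assoc]
  rw [Finset.sum_congr rfl fun i _ => h4 i, Finset.sum_add_distrib, Finset.sum_add_distrib, h3]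
  simp

/-- The kernel of an endomorphism commuting with the action, as a Lie submodule. -/
def kerSub (C : M →ₗ[K] M) (hC : ∀ (x : Q) (m : M), C ⁅x, m⁆ = ⁅x, C m⁆) : LieSubmodule K Q M :=
  { LinearMap.ker C with
    lie_mem := by
      intro x m hm
      have hm' : C m = 0 := hm
      change C ⁅x, m⁆ = 0
      rw [hC, hm', lie_zero] }

lemma mem_kerSub (C : M →ₗ[K] M) (hC : ∀ (x : Q) (m : M), C ⁅x, m⁆ = ⁅x, C m⁆) (m : M) :
  m ∈ kerSub C hC ↔ C m = 0 := Iff.rfl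
end

lemma linearMap_eq_zero_of_lie {M : Type*} [AddCommGroup M] [Module K M] (f : Q →ₗ[K] M) (hf : ∀ x y : Q, f ⁅x, y⁆ = 0) : f = 0 := by
  ext x
  have := perfect_top (K := K) x
  induction this using Submodule.span_induction with
  | mem x h => obtain ⟨y, z, rfl⟩ := h; exact hf y z
  | zero => simp
  | add x y _ _ hx hy => simp [hx, hy]
  | smul t x _ hx => simp [hx]

/-- Whitehead's first lemma by induction on the dimension of `M`, bounded by `n`. If the Casimir
operator is invertible it gives an explicit primitive; otherwise its kernel is a proper nonzero submodule
and the induction hypothesis applies to it and to the quotient by it. -/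
theorem whitehead_one_aux (n : ℕ) : ∀ (M : Type w) [AddCommGroup M] [Module K M] [LieRingModule Q M]
    [LieModule K Q M] [Module.Finite K M], finrank K M < n → ∀ f : Q →ₗ[K] M,
    (∀ x y, f ⁅x, y⁆ = ⁅x, f y⁆ - ⁅y, f x⁆) → ∃ m, ∀ x, f x = ⁅x, m⁆ := by
  induction n with
  | zero => intro M _ _ _ _ _ h; omega
  | succ n ih =>
    intro M _ _ _ _ _ hn f hf
    by_cases hM : ∃ x : Q, ∃ m : M, ⁅x, m⁆ ≠ 0
    swap
    · push Not at hM
      refine ⟨0, fun x => ?_⟩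
      rw [linearMap_eq_zero_of_lie f (by simp [hf, hM])]
      simp
    obtain ⟨k, e, e', C, hinv, hCm, hC, hC0⟩ := exists_casimir' (K := K) hM
    by_cases hinj : LinearMap.ker C = ⊥
    -- The Casimir operator turns the cocycle into an explicit coboundary.
    · have hCf : ∀ x, C (f x) = ⁅x, ∑ i, ⁅e i, f (e' i)⁆⁆ := by
        intro x
        have h1 := hinv x f
        rw [hCm, lie_sum]
        simp only [leibniz_lie x (e _)]
        rw [Finset.sum_add_distrib, h1, ← Finset.sum_neg_distrib, ← Finset.sum_add_distrib]
        refine Finset.sum_congr rfl fun i _ => ?_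
        rw [hf]; simp
      have hsurj : Function.Surjective C := LinearMap.surjective_of_injective (LinearMap.ker_eq_bot.1 hinj)
      obtain ⟨m, hm⟩ := hsurj (∑ i, ⁅e i, f (e' i)⁆)
      refine ⟨m, fun x => LinearMap.ker_eq_bot.1 hinj ?_⟩
      rw [hCf, hC, hm]
    · set W := kerSub C hC
      have hW0 : W ≠ ⊥ := by
        intro h; apply hinj; rw [← LieSubmodule.toSubmodule_eq_bot] at h; exact h
      have hW1 : W ≠ ⊤ := by
        intro h; apply hC0; ext m
        have : m ∈ W := h ▸ LieSubmodule.mem_top m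
        exact (mem_kerSub C hC m).1 this
      clear_value W
      obtain ⟨p, hp, hpW⟩ := exists_quotient_hom W
      obtain ⟨m', hm'⟩ := ih (M ⧸ W) (by have := finrank_quot_lt W hW0; omega)
        ((p : M →ₗ[K] M ⧸ W) ∘ₗ f) (by intro x y; simp [hf])
      obtain ⟨m, rfl⟩ := hp m'
      have hf0W : ∀ x, f x - ⁅x, m⁆ ∈ W := by
        intro x
        rw [← hpW, map_sub, LieModuleHom.map_lie, ← hm' x]
        simp
      let f0 : Q →ₗ[K] W :=
        { toFun := fun x => ⟨f x - ⁅x, m⁆, hf0W x⟩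
          map_add' := fun x y => by ext; simp; abel
          map_smul' := fun t x => by ext; simp [smul_sub] }
      have hf0 : ∀ x, (f0 x : M) = f x - ⁅x, m⁆ := fun x => rfl
      obtain ⟨u, hu⟩ := ih W (by have := finrank_sub_lt W hW1; omega) f0 (by
          intro x y; ext
          rw [hf0, LieSubmodule.coe_sub, LieSubmodule.coe_bracket, LieSubmodule.coe_bracket, hf0, hf0, hf,
            lie_sub, lie_sub, lie_lie]
          abel)
      refine ⟨m + u, fun x => ?_⟩
      have := congrArg Subtype.val (hu x)
      rw [hf0, LieSubmodule.coe_bracket] at this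
      rw [lie_add, ← this]; abel

/-- Whitehead's first lemma, `H¹(Q, M) = 0`. -/
theorem whitehead_one {M : Type*} [AddCommGroup M] [Module K M] [LieRingModule Q M]
    [LieModule K Q M] [Module.Finite K M] (f : Q →ₗ[K] M)
    (hf : ∀ x y, f ⁅x, y⁆ = ⁅x, f y⁆ - ⁅y, f x⁆) : ∃ m, ∀ x, f x = ⁅x, m⁆ :=
  whitehead_one_aux _ M (Nat.lt_succ_self _) f hf

/-- Whitehead's second lemma by the same induction as the first. When the action is trivial, a
2-cocycle is a 1-cocycle with values in `Hom(Q, M)`, so the first lemma applies. -/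
theorem whitehead_two_aux (n : ℕ) : ∀ (M : Type w) [AddCommGroup M] [Module K M] [LieRingModule Q M]
    [LieModule K Q M] [Module.Finite K M], finrank K M < n → ∀ ω : Q →ₗ[K] Q →ₗ[K] M,
    (∀ x y, ω x y = - ω y x) →
    (∀ x y z, ⁅x, ω y z⁆ - ⁅y, ω x z⁆ + ⁅z, ω x y⁆ - ω ⁅x, y⁆ z + ω ⁅x, z⁆ y - ω ⁅y, z⁆ x = 0) →
    ∃ η : Q →ₗ[K] M, ∀ x y, ω x y = ⁅x, η y⁆ - ⁅y, η x⁆ - η ⁅x, y⁆ := by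
  induction n with
  | zero => intro M _ _ _ _ _ h; omega
  | succ n ih =>
    intro M _ _ _ _ _ hn ω halt hω
    by_cases hM : ∃ x : Q, ∃ m : M, ⁅x, m⁆ ≠ 0
    swap
    · push Not at hM
      obtain ⟨η, hη⟩ := whitehead_one (M := Q →ₗ[K] M) ω (by
        intro x y
        ext z
        have h := hω x y z
        simp only [hM] at h
        rw [LinearMap.sub_apply, LieHom.lie_apply, LieHom.lie_apply, hM, hM]
        rw [halt y, halt x]
        rw [← sub_eq_zero, ← neg_eq_zero, ← h]
        abel)
      refine ⟨η, fun x y => ?_⟩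
      rw [hη, LieHom.lie_apply, hM, hM]; abel
    obtain ⟨k, e, e', C, hinv, hCm, hC, hC0⟩ := exists_casimir' (K := K) hM
    by_cases hinj : LinearMap.ker C = ⊥
    · let h : Q →ₗ[K] M := ∑ i, toEnd K Q M (e i) ∘ₗ ω (e' i)
      have hh : ∀ x, h x = ∑ i, ⁅e i, ω (e' i) x⁆ := fun x => by simp [h]
      have hxh : ∀ x y : Q, ⁅x, h y⁆ = ∑ i, ⁅e i, ⁅x, ω (e' i) y⁆ - ω ⁅x, e' i⁆ y⁆ := by
        intro x y
        have h1 := hinv x (ω.flip y)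
        simp only [LinearMap.flip_apply] at h1
        rw [hh, lie_sum]
        simp only [leibniz_lie x (e _)]
        rw [Finset.sum_add_distrib, h1, ← Finset.sum_neg_distrib, ← Finset.sum_add_distrib]
        refine Finset.sum_congr rfl fun i _ => ?_
        rw [lie_sub]; abel
      have hCf : ∀ x y, C (ω x y) = ⁅x, h y⁆ - ⁅y, h x⁆ - h ⁅x, y⁆ := by
        intro x y
        rw [hxh, hxh, hh, hCm, ← Finset.sum_sub_distrib, ← Finset.sum_sub_distrib]
        refine Finset.sum_congr rfl fun i _ => ?_
        rw [← lie_sub, ← lie_sub]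
        congr 1
        have h2 := hω (e' i) x y
        rw [halt ⁅x, y⁆, ← lie_skew, ← lie_skew (e' i) y] at h2
        simp only [map_neg, LinearMap.neg_apply] at h2
        rw [← sub_eq_zero, ← h2]
        abel
      let Ce := LinearEquiv.ofInjectiveEndo C (LinearMap.ker_eq_bot.1 hinj)
      have hCe : ∀ m, C (Ce.symm m) = m := fun m => Ce.apply_symm_apply m
      refine ⟨(Ce.symm : M →ₗ[K] M) ∘ₗ h, fun x y => LinearMap.ker_eq_bot.1 hinj ?_⟩
      rw [hCf, map_sub, map_sub, hC, hC]
      simp [hCe]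
    · set W := kerSub C hC
      have hW0 : W ≠ ⊥ := by
        intro h; apply hinj; rw [← LieSubmodule.toSubmodule_eq_bot] at h; exact h
      have hW1 : W ≠ ⊤ := by
        intro h; apply hC0; ext m
        have : m ∈ W := h ▸ LieSubmodule.mem_top m
        exact (mem_kerSub C hC m).1 this
      clear_value W
      obtain ⟨p, hp, hpW⟩ := exists_quotient_hom W
      obtain ⟨η', hη'⟩ := ih (M ⧸ W) (by have := finrank_quot_lt W hW0; omega)
        (ω.compr₂ (p : M →ₗ[K] M ⧸ W)) (by intro x y; simp [halt x y])
        (by intro x y z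
            have := congrArg p (hω x y z)
            simp only [map_add, map_sub, LieModuleHom.map_lie, map_zero] at this
            exact this)
      obtain ⟨η, hη⟩ := Module.projective_lifting_property (p : M →ₗ[K] M ⧸ W) η' hp
      have hη : ∀ x, p (η x) = η' x := fun x => LinearMap.congr_fun hη x
      have hωmemW : ∀ x y, ω x y - (⁅x, η y⁆ - ⁅y, η x⁆ - η ⁅x, y⁆) ∈ W := by
        intro x y
        rw [← hpW]
        have := hη' x y
        simp only [map_sub, LieModuleHom.map_lie, hη]
        rw [← this]
        simp
      let ω0 : Q →ₗ[K] Q →ₗ[K] W := LinearMap.mk₂ K (fun x y => ⟨_, hωmemW x y⟩)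
        (fun x y z => by ext; simp; abel) (fun t x y => by ext; simp [smul_sub])
        (fun x y z => by ext; simp; abel) (fun t x y => by ext; simp [smul_sub])
      have hω0 : ∀ x y, (ω0 x y : M) = ω x y - (⁅x, η y⁆ - ⁅y, η x⁆ - η ⁅x, y⁆) := fun x y => rfl
      obtain ⟨u, hu⟩ := ih W (by have := finrank_sub_lt W hW1; omega) ω0 (by
          intro x y; ext
          rw [LieSubmodule.coe_neg, hω0, hω0, halt x y, ← lie_skew x y, map_neg]
          abel) (by
          intro x y z; ext
          have h := hω x y z
          have j : η ⁅⁅x, y⁆, z⁆ - η ⁅⁅x, z⁆, y⁆ + η ⁅⁅y, z⁆, x⁆ = 0 := by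
            rw [← map_sub, ← map_add, ← lie_skew ⁅x, z⁆ y, lie_lie x y z, ← lie_skew ⁅y, z⁆ x]
            rw [← map_zero η]
            congr 1
            abel
          simp only [LieSubmodule.coe_sub, LieSubmodule.coe_add, LieSubmodule.coe_bracket, hω0,
            lie_sub, LieSubmodule.coe_zero, lie_lie x y (_ : M), lie_lie x z (_ : M), lie_lie y z (_ : M)]
          rw [← h, ← sub_eq_zero, ← neg_eq_zero, ← j]
          abel)
      refine ⟨η + W.toSubmodule.subtype ∘ₗ u, fun x y => ?_⟩
      have := congrArg Subtype.val (hu x y)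
      simp only [LieSubmodule.coe_sub, LieSubmodule.coe_bracket, hω0] at this
      simp only [LinearMap.add_apply, LinearMap.comp_apply, Submodule.subtype_apply, lie_add]
      rw [sub_eq_iff_eq_add] at this
      rw [this]
      abel

/-- Whitehead's second lemma, `H²(Q, M) = 0`. -/
theorem whitehead_two {M : Type*} [AddCommGroup M] [Module K M] [LieRingModule Q M]
    [LieModule K Q M] [Module.Finite K M] (ω : Q →ₗ[K] Q →ₗ[K] M) (halt : ∀ x y, ω x y = - ω y x)
    (hω : ∀ x y z,
      ⁅x, ω y z⁆ - ⁅y, ω x z⁆ + ⁅z, ω x y⁆ - ω ⁅x, y⁆ z + ω ⁅x, z⁆ y - ω ⁅y, z⁆ x = 0) :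
    ∃ η : Q →ₗ[K] M, ∀ x y, ω x y = ⁅x, η y⁆ - ⁅y, η x⁆ - η ⁅x, y⁆ :=
  whitehead_two_aux _ M (Nat.lt_succ_self _) ω halt hω
end

/-! ### Exponentials of nilpotent endomorphisms, and quotients -/

section
variable {K E F : Type*} [Field K] [CharZero K]

/-- The exponential of a nilpotent element of a `K`-algebra, as a finite sum with coefficients in `K`.
This is `IsNilpotent.exp` without the `ℚ`-module structure; for an element that is not nilpotent it is
the empty sum `0`. -/
noncomputable def nexp {A : Type*} [Ring A] [Algebra K A] (a : A) : A :=
  ∑ i ∈ Finset.range (nilpotencyClass a), (i.factorial : K)⁻¹ • a ^ i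

section
variable [AddCommGroup E] [Module K E]

lemma nexp_eq_exp [Module ℚ E] (a : Module.End K E) :
    nexp (K := K) a = IsNilpotent.exp a := by
  simp only [nexp, IsNilpotent.exp]
  refine Finset.sum_congr rfl fun i _ => ?_
  ext x
  rw [LinearMap.smul_apply, LinearMap.smul_apply]
  exact inv_natCast_smul_eq K ℚ _ _

lemma nexp_eq_sum {a : Module.End K E} {k : ℕ} (h : a ^ k = 0) :
    nexp (K := K) a = ∑ i ∈ Finset.range k, (i.factorial : K)⁻¹ • a ^ i := by
  let _ : Module ℚ E := Module.compHom E (algebraMap ℚ K)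
  rw [nexp_eq_exp, IsNilpotent.exp_eq_sum h]
  refine Finset.sum_congr rfl fun i _ => ?_
  ext x
  rw [LinearMap.smul_apply, LinearMap.smul_apply]
  exact (inv_natCast_smul_eq K ℚ _ _).symm

lemma nexp_add {a b : Module.End K E} (h : Commute a b) (ha : IsNilpotent a) (hb : IsNilpotent b) :
    nexp (K := K) (a + b) = nexp (K := K) a * nexp (K := K) b := by
  let _ : Module ℚ E := Module.compHom E (algebraMap ℚ K)
  simp only [nexp_eq_exp]
  exact IsNilpotent.exp_add_of_commute h ha hb
end

variable [LieRing E] [LieAlgebra K E] [LieRing F] [LieAlgebra K F]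

/-- The exponential of a nilpotent inner derivation is multiplicative for the bracket. -/
lemma nexp_ad_lie {v : E} (hv : IsNilpotent (ad K E v)) (x y : E) :
    nexp (K := K) (ad K E v) ⁅x, y⁆ = ⁅nexp (K := K) (ad K E v) x, nexp (K := K) (ad K E v) y⁆ := by
  let _ : Module ℚ E := Module.compHom E (algebraMap ℚ K)
  let _ : LieAlgebra ℚ E :=
    { lie_smul := fun t x y => lie_smul (algebraMap ℚ K t) x y }
  have h : (LieDerivation.ad K E v : E →ₗ[K] E) = ad K E v := by ext; simp
  rw [nexp_eq_exp, ← h]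
  exact (LieDerivation.exp (LieDerivation.ad K E v) (h ▸ hv)).map_lie x y

/-- The inner automorphism `exp (ad v)` for `ad v` nilpotent, as a Lie algebra homomorphism. -/
noncomputable def conj {v : E} (hv : IsNilpotent (ad K E v)) : E →ₗ⁅K⁆ E :=
  { nexp (K := K) (ad K E v) with
    map_lie' := nexp_ad_lie hv _ _ }

lemma conj_apply {v : E} (hv : IsNilpotent (ad K E v)) (x : E) :
    conj hv x = nexp (K := K) (ad K E v) x := rfl

lemma map_ad_pow (p : E →ₗ⁅K⁆ F) (v x : E) (k : ℕ) :
    p ((ad K E v ^ k) x) = (ad K F (p v) ^ k) (p x) := by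
  induction k with
  | zero => simp
  | succ k ih => rw [pow_succ', pow_succ', Module.End.mul_apply, Module.End.mul_apply, ← ih]; simp

lemma ad_nilp_map (p : E →ₗ⁅K⁆ F) (hp : Function.Surjective p) {v : E} {k : ℕ} (hv : ad K E v ^ k = 0) :
    ad K F (p v) ^ k = 0 := by
  ext y
  obtain ⟨x, rfl⟩ := hp y
  rw [← map_ad_pow, hv]; simp

lemma map_nexp (p : E →ₗ⁅K⁆ F) (hp : Function.Surjective p) {v : E} (hv : IsNilpotent (ad K E v)) (x : E) :
    p (nexp (K := K) (ad K E v) x) = nexp (K := K) (ad K F (p v)) (p x) := by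
  obtain ⟨k, hk⟩ := hv
  rw [nexp_eq_sum hk, nexp_eq_sum (ad_nilp_map p hp hk)]
  simp [LinearMap.sum_apply, map_ad_pow]
end

section
variable {K E F : Type*} [Field K] [LieRing E] [LieAlgebra K E] [LieRing F]
  [LieAlgebra K F]

/-- The quotient by an ideal `c`, together with the factorisation through it of a homomorphism `π`
killing `c`. -/
lemma exists_quotient_lieHom (c : LieIdeal K E) (π : E →ₗ⁅K⁆ F) (hc : ∀ x ∈ c, π x = 0) :
    ∃ (p : E →ₗ⁅K⁆ E ⧸ c) (π' : E ⧸ c →ₗ⁅K⁆ F), Function.Surjective p ∧ (∀ x, p x = 0 ↔ x ∈ c) ∧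
      ∀ x, π' (p x) = π x := by
  let p : E →ₗ⁅K⁆ E ⧸ c :=
    { (LieSubmodule.Quotient.mk' c : E →ₗ[K] E ⧸ c) with
      map_lie' := rfl }
  have hp : Function.Surjective p := LieSubmodule.Quotient.surjective_mk' c
  let q : E ⧸ c →ₗ[K] F := c.toSubmodule.liftQ (π : E →ₗ[K] F) hc
  have hq : ∀ x, q (p x) = π x := fun x => rfl
  refine ⟨p, { q with map_lie' := ?_ }, hp, fun x => LieSubmodule.Quotient.mk_eq_zero c, hq⟩
  intro x y
  obtain ⟨x, rfl⟩ := hp x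
  obtain ⟨y, rfl⟩ := hp y
  change q ⁅p x, p y⁆ = ⁅q (p x), q (p y)⁆
  rw [← LieHom.map_lie, hq, hq, hq, LieHom.map_lie]

/-- If the kernel of `π` is nonzero and consists of ad-nilpotent elements then it is nilpotent (Engel),
and its centre is a nonzero ideal of `E`. -/
lemma exists_central_ideal [Module.Finite K E] (π : E →ₗ⁅K⁆ F) (hπ : ¬ Function.Injective π)
    (hnil : ∀ x, π x = 0 → IsNilpotent (ad K E x)) :
    ∃ c : LieIdeal K E, c ≠ ⊥ ∧ (∀ x ∈ c, π x = 0) ∧ ∀ x y, π x = 0 → y ∈ c → ⁅x, y⁆ = 0 := by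
  let I := π.ker
  have hI : Nontrivial I := by
    rw [LieSubmodule.nontrivial_iff_ne_bot]
    exact fun h => hπ ((LieHom.ker_eq_bot π).1 h)
  have h1 : LieModule.IsNilpotent I I := by
    rw [isNilpotent_iff_forall' (R := K)]
    intro x
    obtain ⟨k, hk⟩ := hnil x ((LieHom.mem_ker (f := π)).1 x.2)
    refine ⟨k, ?_⟩
    have : ∀ k (y : I), (((toEnd K I I x) ^ k) y : E) = (ad K E x ^ k) y := by
      intro k y
      induction k with
      | zero => simp
      | succ k ih => rw [pow_succ', pow_succ', Module.End.mul_apply, Module.End.mul_apply, ← ih]; simp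
    ext y
    rw [this, hk]; simp
  have h2 : Nontrivial (maxTrivSubmodule K I I) := nontrivial_max_triv_of_isNilpotent K I I
  let c : LieIdeal K E :=
    { carrier := {y | π y = 0 ∧ ∀ x, π x = 0 → ⁅x, y⁆ = 0}
      add_mem' := by
        rintro a b ⟨h1, h2⟩ ⟨h3, h4⟩
        exact ⟨by simp [h1, h3], fun x hx => by simp [h2 x hx, h4 x hx]⟩
      zero_mem' := by simp
      smul_mem' := by
        rintro t a ⟨h1, h2⟩
        exact ⟨by simp [h1], fun x hx => by simp [h2 x hx]⟩
      lie_mem := by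
        rintro z a ⟨h1, h2⟩
        refine ⟨by simp [h1], fun x hx => ?_⟩
        rw [leibniz_lie, h2 x hx, h2 ⁅x, z⁆ (by simp [hx])]; simp }
  refine ⟨c, ?_, fun x hx => hx.1, fun x y hx hy => hy.2 x hx⟩
  obtain ⟨⟨y, hy⟩, hy0⟩ := exists_ne (0 : maxTrivSubmodule K I I)
  intro hc
  apply hy0
  ext
  have hyc : (y : E) ∈ c := by
    refine ⟨(LieHom.mem_ker (f := π)).1 y.2, fun x hx => ?_⟩
    have := (mem_maxTrivSubmodule K I I y).1 hy ⟨x, by simpa [I] using hx⟩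
    simpa using congrArg Subtype.val this
  rw [hc] at hyc
  simpa using hyc
end

/-! ### Levi sections and their conjugacy -/

section
variable {K Q : Type*} [Field K] [LieRing Q] [LieAlgebra K Q]

/-- The Lie ring module structure on `M` given by a representation `ρ`. -/
abbrev repRing {M : Type*} [AddCommGroup M] [Module K M] (ρ : Q →ₗ[K] M →ₗ[K] M)
    (hρ : ∀ x y m, ρ ⁅x, y⁆ m = ρ x (ρ y m) - ρ y (ρ x m)) : LieRingModule Q M where
  bracket x m := ρ x m
  add_lie x y m := by simp
  lie_add x m m' := by simp
  leibniz_lie x y m := by rw [hρ]; abel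

lemma repModule {M : Type*} [AddCommGroup M] [Module K M] (ρ : Q →ₗ[K] M →ₗ[K] M)
    (hρ : ∀ x y m, ρ ⁅x, y⁆ m = ρ x (ρ y m) - ρ y (ρ x m)) :
    let _ := repRing ρ hρ; LieModule K Q M :=
  letI := repRing ρ hρ
  { smul_lie := fun t x m => by change ρ (t • x) m = t • ρ x m; simp
    lie_smul := fun t x m => by change ρ x (t • m) = t • ρ x m; simp }

/-- The action of `Q` on an ideal `c` of `E` through a linear map `s : Q → E` and the adjoint action.
It need not be a representation unless `s` is a homomorphism modulo the centraliser of `c`. -/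
noncomputable def actOn {E : Type*} [LieRing E] [LieAlgebra K E] (c : LieIdeal K E) (s : Q →ₗ[K] E) :
    Q →ₗ[K] c →ₗ[K] c :=
  LinearMap.mk₂ K (fun x m => ⟨⁅s x, (m : E)⁆, c.lie_mem m.2⟩)
    (fun x y m => by ext; simp) (fun t x m => by ext; simp)
    (fun x y m => by ext; simp) (fun t x m => by ext; simp)

lemma coe_actOn {E : Type*} [LieRing E] [LieAlgebra K E] (c : LieIdeal K E) (s : Q →ₗ[K] E) (x : Q) (m : c) :
  (actOn c s x m : E) = ⁅s x, (m : E)⁆ := rfl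
end

section
variable {K Q : Type*} [Field K] [CharZero K] [LieRing Q] [LieAlgebra K Q] [Module.Finite K Q] [HasTrivialRadical K Q]

/-- Levi's theorem for a surjection onto a semisimple Lie algebra whose kernel consists of ad-nilpotent
elements, by induction on `dim E`. Dividing by a nonzero ideal `c` central in the kernel, a section exists
modulo `c`; the failure of a linear lift to be a homomorphism is a 2-cocycle with values in `c`. -/
theorem exists_levi_section (n : ℕ) : ∀ (E : Type w) [LieRing E] [LieAlgebra K E] [Module.Finite K E],
    finrank K E < n → ∀ π : E →ₗ⁅K⁆ Q, Function.Surjective π →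
    (∀ x, π x = 0 → IsNilpotent (ad K E x)) → ∃ s : Q →ₗ⁅K⁆ E, ∀ q, π (s q) = q := by
  induction n with
  | zero => intro E _ _ _ h; omega
  | succ n ih =>
    intro E _ _ _ hn π hπ hnil
    by_cases hinj : Function.Injective π
    · let f := LieEquiv.ofBijective π ⟨hinj, hπ⟩
      exact ⟨f.symm, fun q => f.apply_symm_apply q⟩
    obtain ⟨c, hc0, hcπ, hcc⟩ := exists_central_ideal π hinj hnil
    obtain ⟨p, π', hp, hpc, hπ'⟩ := exists_quotient_lieHom c π hcπ
    obtain ⟨s', hs'⟩ := ih (E ⧸ c) (by have := finrank_quot_lt c hc0; omega) π'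
      (fun q => by obtain ⟨x, rfl⟩ := hπ q; exact ⟨p x, hπ' x⟩)
      (fun x hx => by
        obtain ⟨y, rfl⟩ := hp x
        obtain ⟨k, hk⟩ := hnil y (by rw [← hπ', hx])
        exact ⟨k, ad_nilp_map p hp hk⟩)
    obtain ⟨s, hs⟩ := Module.projective_lifting_property (p : E →ₗ[K] E ⧸ c) (s' : Q →ₗ[K] E ⧸ c) hp
    have hs : ∀ x, p (s x) = s' x := fun x => LinearMap.congr_fun hs x
    have hωc : ∀ x y, ⁅s x, s y⁆ - s ⁅x, y⁆ ∈ c := by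
      intro x y
      rw [← hpc, map_sub, LieHom.map_lie, hs, hs, hs, LieHom.map_lie, sub_self]
    let ω : Q →ₗ[K] Q →ₗ[K] c := LinearMap.mk₂ K (fun x y => ⟨_, hωc x y⟩)
      (fun x y z => by ext; simp; abel) (fun t x y => by ext; simp [smul_sub])
      (fun x y z => by ext; simp; abel) (fun t x y => by ext; simp [smul_sub])
    have hω : ∀ x y, (ω x y : E) = ⁅s x, s y⁆ - s ⁅x, y⁆ := fun x y => rfl
    have hρ : ∀ x y m, actOn c s ⁅x, y⁆ m = actOn c s x (actOn c s y m) - actOn c s y (actOn c s x m) := by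
      intro x y m
      ext
      have h1 := hcc (ω x y) m (hcπ _ (ω x y).2) m.2
      rw [hω, sub_lie, sub_eq_zero] at h1
      simp only [coe_actOn, LieSubmodule.coe_sub]
      rw [← h1, lie_lie]
    let _ := repRing (actOn c s) hρ
    have := repModule (actOn c s) hρ
    have hact : ∀ (x : Q) (m : c), ((⁅x, m⁆ : c) : E) = ⁅s x, (m : E)⁆ := fun _ _ => rfl
    obtain ⟨η, hη⟩ := whitehead_two (M := c) ω (by
        intro x y; ext
        rw [LieSubmodule.coe_neg, hω, hω, ← lie_skew, ← lie_skew x y, map_neg]; abel) (by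
        intro x y z; ext
        have j : s ⁅⁅x, y⁆, z⁆ - s ⁅⁅x, z⁆, y⁆ + s ⁅⁅y, z⁆, x⁆ = 0 := by
          rw [← map_sub, ← map_add, ← lie_skew ⁅x, z⁆ y, lie_lie x y z, ← lie_skew ⁅y, z⁆ x]
          rw [← map_zero s]
          congr 1
          abel
        simp only [LieSubmodule.coe_sub, LieSubmodule.coe_add, hact, hω, LieSubmodule.coe_zero, lie_sub]
        rw [← j, leibniz_lie (s x) (s y) (s z), ← lie_skew (s z) ⁅s x, s y⁆, ← lie_skew (s z) (s ⁅x, y⁆),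
           ← lie_skew (s y) (s ⁅x, z⁆), ← lie_skew (s x) (s ⁅y, z⁆)]
        abel)
    refine ⟨{ s - c.toSubmodule.subtype ∘ₗ η with map_lie' := ?_ }, ?_⟩
    · intro x y
      change s ⁅x, y⁆ - (η ⁅x, y⁆ : E) = ⁅s x - (η x : E), s y - (η y : E)⁆
      have h1 := congrArg Subtype.val (hη x y)
      simp only [LieSubmodule.coe_sub, hact, hω] at h1
      have h2 := hcc (η x) (η y) (hcπ _ (η x).2) (η y).2
      rw [sub_lie, lie_sub, lie_sub, h2, ← lie_skew (η x : E)]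
      rw [← sub_eq_zero] at h1
      rw [← sub_eq_zero, ← neg_eq_zero]
      refine Eq.trans ?_ h1
      abel
    · intro q
      change π (s q - (η q : E)) = q
      rw [map_sub, hcπ _ (η q).2, sub_zero, ← hπ', hs, hs']

/-- Malcev's conjugacy theorem: two homomorphisms from a semisimple Lie algebra that agree modulo an
ideal of ad-nilpotent elements differ by `exp (ad v)` with `v` in that ideal. After conjugating modulo a
nonzero ideal `c` central in the kernel, the difference is a 1-cocycle with values in `c`. -/
theorem malcev_conjugacy {F : Type*} [LieRing F] [LieAlgebra K F] (n : ℕ) : ∀ (E : Type w) [LieRing E] [LieAlgebra K E] [Module.Finite K E],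
    finrank K E < n → ∀ π : E →ₗ⁅K⁆ F,
    (∀ x, π x = 0 → IsNilpotent (ad K E x)) → ∀ θ₁ θ₂ : Q →ₗ⁅K⁆ E, (∀ q, π (θ₁ q) = π (θ₂ q)) →
    ∃ v, π v = 0 ∧ ∀ q, θ₂ q = nexp (K := K) (ad K E v) (θ₁ q) := by
  induction n with
  | zero => intro E _ _ _ h; omega
  | succ n ih =>
    intro E _ _ _ hn π hnil θ₁ θ₂ hθ
    by_cases hinj : Function.Injective π
    · refine ⟨0, by simp, fun q => ?_⟩
      rw [nexp_eq_sum (k := 1) (by simp)]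
      simpa using (hinj (hθ q)).symm
    obtain ⟨c, hc0, hcπ, hcc⟩ := exists_central_ideal π hinj hnil
    obtain ⟨p, π', hp, hpc, hπ'⟩ := exists_quotient_lieHom c π hcπ
    obtain ⟨v', hv', hvθ⟩ := ih (E ⧸ c) (by have := finrank_quot_lt c hc0; omega) π'
      (fun x hx => by
        obtain ⟨y, rfl⟩ := hp x
        obtain ⟨k, hk⟩ := hnil y (by rw [← hπ', hx])
        exact ⟨k, ad_nilp_map p hp hk⟩) (p.comp θ₁) (p.comp θ₂) (fun q => by simp [hπ', hθ])
    obtain ⟨v, rfl⟩ := hp v'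
    have hv : π v = 0 := by rw [← hπ', hv']
    have hvn := hnil v hv
    -- After this conjugation the two homomorphisms agree modulo `c`.
    set θ : Q →ₗ⁅K⁆ E := (conj hvn).comp θ₁ with hθdef
    have hθ' : ∀ q, θ q = nexp (K := K) (ad K E v) (θ₁ q) := fun q => rfl
    clear_value θ
    have hδc : ∀ q, θ₂ q - θ q ∈ c := by
      intro q
      rw [← hpc, hθ', map_sub, map_nexp p hp hvn, sub_eq_zero]
      exact hvθ q
    let δ : Q →ₗ[K] c :=
      { toFun := fun q => ⟨_, hδc q⟩
        map_add' := fun x y => by ext; simp; abel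
        map_smul' := fun t x => by ext; simp [smul_sub] }
    have hδ : ∀ q, (δ q : E) = θ₂ q - θ q := fun q => rfl
    let s : Q →ₗ[K] E := θ
    have hs : ∀ q, s q = θ q := fun q => rfl
    have hρ : ∀ x y m, actOn c s ⁅x, y⁆ m = actOn c s x (actOn c s y m) - actOn c s y (actOn c s x m) := by
      intro x y m
      ext
      simp only [coe_actOn, LieSubmodule.coe_sub, hs]
      rw [LieHom.map_lie, lie_lie]
    let _ := repRing (actOn c s) hρ
    have := repModule (actOn c s) hρ
    have hact : ∀ (x : Q) (m : c), ((⁅x, m⁆ : c) : E) = ⁅θ x, (m : E)⁆ := fun _ _ => rfl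
    obtain ⟨m, hm⟩ := whitehead_one (M := c) δ (by
      intro x y
      ext
      have h2 := hcc (δ x) (δ y) (hcπ _ (δ x).2) (δ y).2
      rw [hδ, hδ, lie_sub, sub_lie, sub_lie] at h2
      simp only [LieSubmodule.coe_sub, hact, hδ, lie_sub, LieHom.map_lie]
      rw [← lie_skew (θ y) (θ₂ x), ← lie_skew (θ y) (θ x), ← sub_eq_zero, ← h2]
      abel)
    have hmπ := hcπ m m.2
    have hu2 : ad K E (-m) ^ 2 = 0 := by
      ext y
      rw [pow_two, Module.End.mul_apply]
      simp only [ad_apply]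
      exact hcc _ _ (by simp [hmπ]) (by rw [← lie_skew]; exact neg_mem (c.lie_mem (neg_mem m.2)))
    have hcomm : Commute (ad K E (-m)) (ad K E v) := by
      ext y
      simp only [Module.End.mul_apply, ad_apply]
      rw [leibniz_lie, ← lie_skew (-(m : E)) v, hcc v _ hv (neg_mem m.2)]
      simp
    refine ⟨-m + v, by simp [hmπ, hv], fun q => ?_⟩
    rw [map_add, nexp_add hcomm ⟨2, hu2⟩ hvn, Module.End.mul_apply, ← hθ', nexp_eq_sum hu2]
    have h3 := congrArg Subtype.val (hm q)
    rw [hδ, hact] at h3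
    rw [Finset.sum_range_succ, Finset.sum_range_one]
    simp
    rw [← h3]; abel
end

/-! ### The radical of a perfect Lie algebra acts nilpotently -/

/-- A perfect Lie algebra acts by traceless endomorphisms. -/
lemma trace_toEnd_of_perfect {K L M : Type*} [Field K] [LieRing L] [LieAlgebra K L]
    [AddCommGroup M] [Module K M] [LieRingModule L M] [LieModule K L M]
    (hL : ∀ x : L, x ∈ Submodule.span K {m | ∃ y z : L, ⁅y, z⁆ = m}) (x : L) :
    LinearMap.trace K M (toEnd K L M x) = 0 := by
  induction hL x using Submodule.span_induction with
  | mem x h =>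
    obtain ⟨y, z, rfl⟩ := h
    have h : toEnd K L M ⁅y, z⁆ = toEnd K L M y * toEnd K L M z - toEnd K L M z * toEnd K L M y := by
      ext m; simp
    rw [h, map_sub, LinearMap.trace_mul_comm, sub_self]
  | zero => simp
  | add x y _ _ hx hy => simp [hx, hy]
  | smul t x _ hx => simp [hx]

/-- The radical of a perfect Lie algebra acts nilpotently on every finite-dimensional module. By
Lie's theorem the radical has a weight `χ` on `M`, its weight space is a submodule for the whole algebra, and
tracelessness forces `χ = 0`; the induction continues on the quotient. -/
theorem radical_nilpotent_aux {K L : Type*} [Field K] [CharZero K] [IsAlgClosed K] [LieRing L] [LieAlgebra K L]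
    [Module.Finite K L] (hL : ∀ x : L, x ∈ Submodule.span K {m | ∃ y z : L, ⁅y, z⁆ = m})
    (n : ℕ) : ∀ (M : Type w) [AddCommGroup M] [Module K M] [LieRingModule L M] [LieModule K L M]
    [Module.Finite K M], finrank K M < n → ∀ x ∈ radical K L, IsNilpotent (toEnd K L M x) := by
  induction n with
  | zero => intro M _ _ _ _ _ h; omega
  | succ n ih =>
    intro M _ _ _ _ _ hn x hx
    rcases subsingleton_or_nontrivial M with hM | hM
    · exact ⟨1, by ext m; exact Subsingleton.elim _ _⟩
    obtain ⟨χ, hχ⟩ := exists_nontrivial_weightSpace_of_isSolvable K (radical K L) M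
    set W : LieSubmodule K L M := weightSpaceOfIsLieTower K M χ with hW
    have hWn : Nontrivial W := hχ
    have hact : ∀ m : W, ⁅x, (m : M)⁆ = χ ⟨x, hx⟩ • (m : M) := by
      rintro ⟨m, hm⟩
      have : ∀ y : radical K L, ⁅y, m⁆ = χ y • m := by
        simpa [W, weightSpaceOfIsLieTower, mem_weightSpace] using hm
      exact this ⟨x, hx⟩
    have h0 : χ ⟨x, hx⟩ = 0 := by
      have h1 := trace_toEnd_of_perfect (M := W) hL x
      have h2 : toEnd K L W x = χ ⟨x, hx⟩ • LinearMap.id := by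
        ext m; simpa using hact m
      rw [h2, map_smul, LinearMap.trace_id, smul_eq_mul, mul_eq_zero] at h1
      refine h1.resolve_right ?_
      exact_mod_cast (finrank_pos (R := K) (M := W)).ne'
    have hWbot : W ≠ ⊥ := by
      rintro h
      rw [h] at hWn
      exact not_subsingleton _ (inferInstance : Subsingleton (⊥ : LieSubmodule K L M))
    obtain ⟨p, hp, hpW⟩ := exists_quotient_hom W
    obtain ⟨k, hk⟩ := ih (M ⧸ W) (by have := finrank_quot_lt W hWbot; omega) x hx
    have hpk : ∀ (j : ℕ) (m : M), p ((toEnd K L M x ^ j) m) = (toEnd K L (M ⧸ W) x ^ j) (p m) := by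
      intro j m
      induction j with
      | zero => simp
      | succ j ihj => rw [pow_succ', pow_succ', Module.End.mul_apply, Module.End.mul_apply, ← ihj]; simp
    refine ⟨k + 1, ?_⟩
    ext m
    have : (toEnd K L M x ^ k) m ∈ W := by
      rw [← hpW, hpk, hk]; rfl
    rw [pow_succ', Module.End.mul_apply, toEnd_apply_apply, hact ⟨_, this⟩, h0]
    simp

theorem isNilpotent_ad_of_mem_radical {K L : Type*} [Field K] [CharZero K] [IsAlgClosed K]
    [LieRing L] [LieAlgebra K L] [Module.Finite K L]
    (hL : ∀ x : L, x ∈ Submodule.span K {m | ∃ y z : L, ⁅y, z⁆ = m}) {x : L}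
    (hx : x ∈ radical K L) : IsNilpotent (ad K L x) :=
  radical_nilpotent_aux hL (finrank K L + 1) L (by omega) x hx

/-! ### Radicals of ideals and quotients -/

section
variable {K E : Type*} [Field K] [LieRing E] [LieAlgebra K E] [Module.Finite K E]

/-- An ideal (presented as an injective `f` with range stable under `ad`) of a semisimple Lie algebra is
semisimple: since the Killing complement centralises it, an abelian ideal of the ideal is an ideal of `E`. -/
lemma hasTrivialRadical_of_ideal [CharZero K] [HasTrivialRadical K E] {N : Type*} [LieRing N] [LieAlgebra K N]
    (f : N →ₗ⁅K⁆ E) (hf : Function.Injective f) (hI : ∀ (e : E) x, ∃ y, f y = ⁅e, f x⁆) :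
    HasTrivialRadical K N := by
  rw [hasTrivialRadical_iff_no_abelian_ideals]
  intro A hA
  let I : LieIdeal K E :=
    { LinearMap.range (f : N →ₗ[K] E) with
      lie_mem := by
        rintro e _ ⟨x, rfl⟩
        exact hI e x }
  have hIc := LieIdeal.isCompl_killingCompl (K := K) (L := E) I
  have hmem : ∀ x, f x ∈ I := fun x => ⟨x, rfl⟩
  let B : LieIdeal K E :=
    { A.toSubmodule.map (f : N →ₗ[K] E) with
      lie_mem := by
        rintro e _ ⟨a, ha, rfl⟩
        have he : e ∈ I ⊔ I.killingCompl := by rw [hIc.sup_eq_top]; trivial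
        rw [LieSubmodule.mem_sup] at he
        obtain ⟨_, ⟨y, rfl⟩, z, hz, rfl⟩ := he
        have h0 : ⁅z, f a⁆ = 0 := by
          have h1 : ⁅z, f a⁆ ∈ I ⊓ I.killingCompl :=
            ⟨I.lie_mem (hmem a), by
              rw [← lie_skew]; exact neg_mem (I.killingCompl.lie_mem hz)⟩
          rwa [hIc.inf_eq_bot, LieSubmodule.mem_bot] at h1
        refine ⟨⁅y, a⁆, A.lie_mem ha, ?_⟩
        change f ⁅y, a⁆ = ⁅f y + z, f a⁆
        rw [add_lie, h0, add_zero, LieHom.map_lie] }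
  have hB : IsLieAbelian B := by
    rw [LieSubmodule.lie_abelian_iff_lie_self_eq_bot, LieSubmodule.lie_eq_bot_iff]
    rintro _ ⟨a, ha, rfl⟩ _ ⟨b, hb, rfl⟩
    rw [LieSubmodule.lie_abelian_iff_lie_self_eq_bot, LieSubmodule.lie_eq_bot_iff] at hA
    change ⁅f a, f b⁆ = 0
    rw [← LieHom.map_lie, hA a ha b hb, map_zero]
  have hB0 := IsKilling.ideal_eq_bot_of_isLieAbelian (R := K) B
  rw [LieSubmodule.eq_bot_iff] at hB0 ⊢
  intro a ha
  exact hf ((hB0 (f a) ⟨a, ha, rfl⟩).trans (map_zero f).symm)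

lemma le_radical_of_lie_le {J : LieIdeal K E} (h : ⁅J, J⁆ ≤ radical K E) : J ≤ radical K E := by
  rw [← LieIdeal.solvable_iff_le_radical] at h ⊢
  rw [isSolvable_iff K] at h ⊢
  obtain ⟨k, hk⟩ := h
  refine ⟨k + 1, ?_⟩
  rw [LieIdeal.derivedSeries_eq_bot_iff] at hk ⊢
  rw [derivedSeriesOfIdeal_add]
  exact hk

lemma hasTrivialRadical_of_quotient {F : Type*} [LieRing F] [LieAlgebra K F] (p : E →ₗ⁅K⁆ F)
    (hp : Function.Surjective p) (hpr : ∀ x, p x = 0 ↔ x ∈ radical K E) : HasTrivialRadical K F := by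
  rw [hasTrivialRadical_iff_no_abelian_ideals]
  intro A hA
  rw [LieSubmodule.lie_abelian_iff_lie_self_eq_bot, LieSubmodule.lie_eq_bot_iff] at hA
  have h : A.comap p ≤ radical K E := by
    refine le_radical_of_lie_le ?_
    rw [LieSubmodule.lieIdeal_oper_eq_span, LieSubmodule.lieSpan_le]
    rintro _ ⟨⟨x, hx⟩, ⟨y, hy⟩, rfl⟩
    rw [LieIdeal.mem_comap] at hx hy
    refine (hpr _).1 ?_
    change p ⁅x, y⁆ = 0
    rw [LieHom.map_lie]
    exact hA _ hx _ hy
  rw [LieSubmodule.eq_bot_iff]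
  intro a ha
  obtain ⟨x, rfl⟩ := hp a
  exact (hpr x).2 (h (LieIdeal.mem_comap.2 ha))

/-- A surjection onto a Lie algebra with trivial radical kills the radical. -/
lemma map_radical {F : Type*} [LieRing F] [LieAlgebra K F] [HasTrivialRadical K F] (p : E →ₗ⁅K⁆ F)
    (hp : Function.Surjective p) {x : E} (hx : x ∈ radical K E) : p x = 0 := by
  let g : radical K E →ₗ⁅K⁆ F := p.comp (radical K E).incl
  let A : LieIdeal K F :=
    { LinearMap.range (g : radical K E →ₗ[K] F) with
      lie_mem := by
        rintro e _ ⟨x, rfl⟩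
        obtain ⟨e, rfl⟩ := hp e
        refine ⟨⟨⁅e, (x : E)⁆, (radical K E).lie_mem x.2⟩, ?_⟩
        exact LieHom.map_lie p e x }
  have hA : IsSolvable A := by
    let g' : radical K E →ₗ⁅K⁆ A :=
      { LinearMap.codRestrict A.toSubmodule (g : radical K E →ₗ[K] F) (fun x => ⟨x, rfl⟩) with
        map_lie' := by
          intro x y
          apply Subtype.ext
          exact LieHom.map_lie g x y }
    refine Function.Surjective.lieAlgebra_isSolvable (f := g') ?_
    rintro ⟨_, x, rfl⟩
    exact ⟨x, rfl⟩
  have := HasTrivialRadical.eq_bot_of_isSolvable A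
  rw [LieSubmodule.eq_bot_iff] at this
  exact this _ ⟨⟨x, hx⟩, rfl⟩
end

/-! ### Conjugating two homomorphisms, and the trace of right multiplication -/

section
variable {K : Type*} [Field K] [CharZero K] [IsAlgClosed K]

/-- Two homomorphisms `i`, `j` from a semisimple Lie algebra to a perfect one are related by one
`exp (ad v)`, `v` in the radical, at all `w` where `j w` and `i w` agree modulo the radical. After
conjugation `i` factors through a Levi section `s₂`, and `j` is conjugate to `s₂` composed with the
projection of `j`. -/
theorem exists_conj {E : Type*} [LieRing E] [LieAlgebra K E] [Module.Finite K E]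
    (hE : ∀ x : E, x ∈ Submodule.span K {m | ∃ y z : E, ⁅y, z⁆ = m})
    {G : Type*} [LieRing G] [LieAlgebra K G] [Module.Finite K G] [HasTrivialRadical K G]
    (i j : G →ₗ⁅K⁆ E) : ∃ v ∈ radical K E, ∀ w, j w - i w ∈ radical K E →
      j w = nexp (K := K) (ad K E v) (i w) := by
  obtain ⟨p, -, hp, hpr, -⟩ := exists_quotient_lieHom (radical K E) (0 : E →ₗ⁅K⁆ E) (by simp)
  have := hasTrivialRadical_of_quotient p hp hpr
  have hnil : ∀ x, p x = 0 → IsNilpotent (ad K E x) := fun x hx =>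
    isNilpotent_ad_of_mem_radical hE ((hpr x).1 hx)
  obtain ⟨s, hs⟩ := exists_levi_section (finrank K E + 1) E (by omega) p hp hnil
  obtain ⟨a, ha, hia⟩ := malcev_conjugacy (finrank K E + 1) E (by omega) p hnil
    (s.comp (p.comp i)) i (fun q => hs (p (i q)))
  -- Replace the Levi section by a conjugate one through which `i` factors.
  let s2 := (conj (hnil a ha)).comp s
  have hs2 : ∀ q, p (s2 q) = q := by
    intro q
    change p (nexp (K := K) (ad K E a) (s q)) = q
    rw [map_nexp p hp (hnil a ha), ha, hs, nexp_eq_sum (k := 1) (by simp)]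
    simp
  obtain ⟨v, hv, hjv⟩ := malcev_conjugacy (finrank K E + 1) E (by omega) p hnil
    (s2.comp (p.comp j)) j (fun q => hs2 (p (j q)))
  refine ⟨v, (hpr v).1 hv, fun w hw => ?_⟩
  have h1 : p (j w) = p (i w) := by rw [← sub_eq_zero, ← map_sub, hpr]; exact hw
  rw [hjv w]
  congr 1
  change s2 (p (j w)) = i w
  rw [h1]
  exact (hia w).symm
end

/-- If `-U` is inverse to a unipotent endomorphism then `U + 1` is nilpotent, so `U` has trace `-dim W`. -/
lemma trace_eq_neg_finrank {K W : Type*} [Field K] [AddCommGroup W] [Module K W]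
    [Module.Finite K W] {U T : Module.End K W} (hT : IsNilpotent T) (h : (1 + T) * U = -1) :
    LinearMap.trace K W U = - (finrank K W : K) := by
  have h' : U * (1 + T) = -1 := by
    have h1 : (1 + T) * (-U) = 1 := by rw [mul_neg, h, neg_neg]
    have h2 := mul_eq_one_comm.1 h1
    rw [neg_mul] at h2
    exact neg_eq_iff_eq_neg.1 h2
  have hc : Commute U T := by
    have := h.trans h'.symm
    rw [add_mul, mul_add, one_mul, mul_one] at this
    exact (add_left_cancel this).symm
  have hn : IsNilpotent (U * T) := hc.isNilpotent_mul_left hT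
  have h3 : U = -(U * T) - 1 := by
    rw [mul_add, mul_one] at h'
    rw [eq_sub_iff_add_eq, ← sub_eq_zero, sub_neg_eq_add, add_right_comm, h', neg_add_cancel]
  have h4 := (LinearMap.isNilpotent_trace_of_isNilpotent hn).eq_zero
  rw [h3, map_sub, map_neg, h4, LinearMap.trace_one]
  simp

/-- On the subspace `r`, the identity `D w = exp T (i w) - i w` reads `w = -φ(A) (R w)` with
`φ(t) = (exp t - 1) / t`, because `exp T - 1 = φ(T) T` and `T ∘ i = -D ∘ R`. As `φ(A)` is unipotent and `R`
maps into `r`, the trace of `R` is `-dim r`. -/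
lemma trace_of_exp_eq {K V E : Type*} [Field K] [CharZero K] [AddCommGroup V] [Module K V]
    [Module.Finite K V] [AddCommGroup E] [Module K E]
    (D i : V →ₗ[K] E) (hD : Function.Injective D) (T : Module.End K E) (hT : IsNilpotent T)
    (A R : Module.End K V) (hA : ∀ w, D (A w) = T (D w)) (hR : ∀ w, D (R w) = - T (i w))
    (r : Submodule K V) (hAr : ∀ w ∈ r, A w ∈ r) (hRr : ∀ w, R w ∈ r)
    (hr : ∀ w ∈ r, D w = nexp (K := K) T (i w) - i w) :
    LinearMap.trace K V R = - (finrank K r : K) := by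
  rw [← LinearMap.trace_restrict_eq_of_forall_mem r R hRr (fun w _ => hRr w)]
  obtain ⟨k, hk⟩ := hT
  have hDA : ∀ (n : ℕ) w, D ((A ^ n) w) = (T ^ n) (D w) := by
    intro n w
    induction n with
    | zero => simp
    | succ n ih => rw [pow_succ', pow_succ', Module.End.mul_apply, Module.End.mul_apply, ← ih, hA]
  have hAk : A ^ k = 0 := by
    ext w
    apply hD
    rw [hDA, hk]; simp
  let X := A.restrict hAr
  have hX : ∀ (n : ℕ) (w : r), ((X ^ n) w : V) = (A ^ n) w := by
    intro n w
    induction n with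
    | zero => simp
    | succ n ih => rw [pow_succ', pow_succ', Module.End.mul_apply, Module.End.mul_apply, ← ih]; rfl
  have hXk : IsNilpotent X := ⟨k, by ext w; rw [hX, hAk]; rfl⟩
  -- `1 + X * S` is the truncation of `φ(X)`.
  let S : Module.End K r := ∑ n ∈ Finset.range k, ((n + 2).factorial : K)⁻¹ • X ^ n
  have hXS : Commute X S := by
    refine Commute.sum_right _ _ _ fun n _ => ?_
    exact ((Commute.refl X).pow_right n).smul_right _
  refine trace_eq_neg_finrank (T := X * S) (hXS.isNilpotent_mul_right hXk) ?_
  have hsum : 1 + X * S = ∑ n ∈ Finset.range (k + 1), ((n + 1).factorial : K)⁻¹ • X ^ n := by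
    rw [Finset.sum_range_succ', add_comm, Finset.mul_sum]
    congr 1
    · refine Finset.sum_congr rfl fun n _ => ?_
      rw [mul_smul_comm, ← pow_succ']
    · simp
  rw [hsum]
  ext w
  apply hD
  have h1 := hr w w.2
  rw [nexp_eq_sum (k := k + 2) (by rw [pow_add, hk, zero_mul]), Finset.sum_range_succ'] at h1
  simp only [LinearMap.add_apply, LinearMap.sum_apply, LinearMap.smul_apply, Nat.factorial_zero, Nat.cast_one,
    inv_one, one_smul, pow_zero, Module.End.one_apply, add_sub_cancel_right] at h1
  have h2 : ((-1 : Module.End K r) w : V) = - (w : V) := by simp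
  rw [h2, map_neg, h1, Module.End.mul_apply, LinearMap.sum_apply, Submodule.coe_sum, map_sum, ← Finset.sum_neg_distrib]
  refine Finset.sum_congr rfl fun n _ => ?_
  rw [LinearMap.smul_apply, Submodule.coe_smul, map_smul, hX, hDA, LinearMap.coe_restrict_apply, hR, map_neg, smul_neg,
    pow_succ, Module.End.mul_apply]

/-! ### The semidirect sum attached to a post-Lie structure -/

section
variable {G N : Type*} [LieRing G] [LieAlgebra ℂ G] [LieRing N] [LieAlgebra ℂ N]

/-- Left multiplications of a post-Lie structure, transported to `N` by `σ`: a homomorphism from `G` to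
the derivations of `N`. -/
noncomputable def leftDer {σ : G ≃ₗ[ℂ] N} {P : G →ₗ[ℂ] G →ₗ[ℂ] G} (hP : IsPostLieStructure σ P) :
    G →ₗ⁅ℂ⁆ LieDerivation ℂ N N where
  toFun x :=
    { toLinearMap := (σ : G →ₗ[ℂ] N) ∘ₗ P x ∘ₗ (σ.symm : N →ₗ[ℂ] G)
      leibniz' := fun a b => by
        have h := congrArg σ (hP.der x (σ.symm a) (σ.symm b))
        simp only [LinearEquiv.apply_symm_apply, map_add] at h
        simp only [LinearMap.comp_apply, LinearEquiv.coe_coe]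
        rw [h, ← lie_skew b]; abel }
  map_add' x y := by ext; simp
  map_smul' t x := by ext; simp
  map_lie' := by
    intro x y
    ext a
    have h := hP.rep x y (σ.symm a)
    simp [h]

lemma leftDer_apply {σ : G ≃ₗ[ℂ] N} {P : G →ₗ[ℂ] G →ₗ[ℂ] G} (hP : IsPostLieStructure σ P)
    (x : G) (a : N) : leftDer hP x a = σ (P x (σ.symm a)) := rfl

/-- The homomorphism `x ↦ (σ x, x)` into the semidirect sum. It respects brackets exactly because of the
identity relating the product to the two brackets. -/
noncomputable def graphHom {σ : G ≃ₗ[ℂ] N} {P : G →ₗ[ℂ] G →ₗ[ℂ] G} (hP : IsPostLieStructure σ P) :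
    G →ₗ⁅ℂ⁆ N ⋊⁅leftDer hP⁆ G where
  toFun x := ⟨σ x, x⟩
  map_add' x y := by simp
  map_smul' t x := by simp
  map_lie' := by
    intro x y
    have h := congrArg σ (hP.diff_eq x y)
    simp only [map_sub, LinearEquiv.apply_symm_apply] at h
    simp only [SemiDirectSum.lie_eq_mk, leftDer_apply, LinearEquiv.symm_apply_apply]
    congr 1
    rw [add_sub_assoc, h]; abel

lemma map_mem_span_lie {K L L' : Type*} [Field K] [LieRing L] [LieAlgebra K L] [LieRing L']
    [LieAlgebra K L'] (f : L →ₗ⁅K⁆ L') {a : L}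
    (ha : a ∈ Submodule.span K {m | ∃ y z : L, ⁅y, z⁆ = m}) :
    f a ∈ Submodule.span K {m | ∃ y z : L', ⁅y, z⁆ = m} := by
  induction ha using Submodule.span_induction with
  | mem x h =>
    obtain ⟨y, z, rfl⟩ := h
    exact Submodule.subset_span ⟨f y, f z, (LieHom.map_lie f y z).symm⟩
  | zero => rw [map_zero]; exact zero_mem _
  | add x y _ _ hx hy => rw [map_add]; exact add_mem hx hy
  | smul t x _ hx => rw [map_smul]; exact Submodule.smul_mem _ t hx

lemma semiDirect_perfect (ψ : G →ₗ⁅ℂ⁆ LieDerivation ℂ N N)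
    (hG : ∀ x : G, x ∈ Submodule.span ℂ {m | ∃ y z : G, ⁅y, z⁆ = m})
    (hN : ∀ x : N, x ∈ Submodule.span ℂ {m | ∃ y z : N, ⁅y, z⁆ = m}) (x : N ⋊⁅ψ⁆ G) :
    x ∈ Submodule.span ℂ {m | ∃ y z : N ⋊⁅ψ⁆ G, ⁅y, z⁆ = m} := by
  have h : x = SemiDirectSum.inl ψ x.left + SemiDirectSum.inr ψ x.right := by simp
  rw [h]
  exact add_mem (map_mem_span_lie _ (hN _)) (map_mem_span_lie _ (hG _))
end

end PostLie

open PostLie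

/-- If `𝔤` is semisimple and `𝔫` is perfect but not semisimple, then there is no post-Lie
algebra structure on `(𝔤, 𝔫)`. -/
theorem no_postLie_of_semisimple_perfect_nonSemisimple
    {G N : Type*} [LieRing G] [LieAlgebra ℂ G] [LieRing N] [LieAlgebra ℂ N]
    [FiniteDimensional ℂ G] (σ : G ≃ₗ[ℂ] N)
    (hG_ss : LieAlgebra.IsSemisimple ℂ G)
    (hN_perfect : ⁅(⊤ : LieIdeal ℂ N), (⊤ : LieIdeal ℂ N)⁆ = ⊤)
    (hN_not_ss : ¬ LieAlgebra.IsSemisimple ℂ N) :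
    ¬ ∃ P : G →ₗ[ℂ] G →ₗ[ℂ] G, IsPostLieStructure σ P := by
  rintro ⟨P, hP⟩
  have : Module.Finite ℂ N := Module.Finite.equiv σ
  have : Module.Finite ℂ (N ⋊⁅leftDer hP⁆ G) :=
    Module.Finite.equiv (SemiDirectSum.toProdl (leftDer hP)).symm
  have hGp : ∀ x : G, x ∈ Submodule.span ℂ {m | ∃ y z : G, ⁅y, z⁆ = m} := perfect_top
  have hNp : ∀ x : N, x ∈ Submodule.span ℂ {m | ∃ y z : N, ⁅y, z⁆ = m} := by
    intro x
    have hx : x ∈ (⁅(⊤ : LieIdeal ℂ N), (⊤ : LieIdeal ℂ N)⁆ : LieIdeal ℂ N) := by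
      rw [hN_perfect]; trivial
    rw [← LieSubmodule.mem_toSubmodule, LieSubmodule.lieIdeal_oper_eq_linear_span'] at hx
    refine Submodule.span_mono ?_ hx
    rintro _ ⟨y, -, z, -, rfl⟩
    exact ⟨y, z, rfl⟩
  have hEp := semiDirect_perfect (leftDer hP) hGp hNp
  let i : G →ₗ⁅ℂ⁆ N ⋊⁅leftDer hP⁆ G := SemiDirectSum.inr (leftDer hP)
  obtain ⟨v, hv, hvw⟩ := exists_conj hEp i (graphHom hP)
  have hrad : ∀ x ∈ radical ℂ (N ⋊⁅leftDer hP⁆ G), x.right = 0 := fun x hx =>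
    map_radical (SemiDirectSum.projr (leftDer hP)) (SemiDirectSum.projr_surjective _) hx
  let D : G →ₗ[ℂ] N ⋊⁅leftDer hP⁆ G := (SemiDirectSum.inl (leftDer hP) : N →ₗ[ℂ] N ⋊⁅leftDer hP⁆ G) ∘ₗ (σ : G →ₗ[ℂ] N)
  have hD : ∀ w, D w = ⟨σ w, 0⟩ := fun w => rfl
  have hi : ∀ w, i w = ⟨0, w⟩ := fun w => rfl
  -- The radical lies in the ideal `N`, so `v` comes from an element of `G`.
  obtain ⟨v, rfl⟩ : ∃ u, D u = v := by
    refine ⟨σ.symm v.left, ?_⟩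
    have := hrad v hv
    rw [hD]
    ext <;> simp [this]
  let A : Module.End ℂ G := (σ.symm : N →ₗ[ℂ] G) ∘ₗ ad ℂ N (σ v) ∘ₗ (σ : G →ₗ[ℂ] N)
  have hA : ∀ w, D (A w) = ad ℂ (N ⋊⁅leftDer hP⁆ G) (D v) (D w) := by
    intro w
    simp [hD, A]
  have hR : ∀ w, D (P.flip v w) = - ad ℂ (N ⋊⁅leftDer hP⁆ G) (D v) (i w) := by
    intro w
    simp [hD, hi, leftDer_apply]
  let r : Submodule ℂ G := (radical ℂ (N ⋊⁅leftDer hP⁆ G)).toSubmodule.comap D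
  have htr := trace_of_exp_eq D (i : G →ₗ[ℂ] N ⋊⁅leftDer hP⁆ G) ((SemiDirectSum.inl_injective _).comp σ.injective)
    (ad ℂ (N ⋊⁅leftDer hP⁆ G) (D v)) (isNilpotent_ad_of_mem_radical hEp hv) A (P.flip v) hA hR r
    (fun w hw => by
      change D (A w) ∈ radical ℂ (N ⋊⁅leftDer hP⁆ G)
      rw [hA]; exact (radical ℂ (N ⋊⁅leftDer hP⁆ G)).lie_mem hw)
    (fun w => by
      change D (P.flip v w) ∈ radical ℂ (N ⋊⁅leftDer hP⁆ G)
      rw [hR, ad_apply, lie_skew]; exact (radical ℂ (N ⋊⁅leftDer hP⁆ G)).lie_mem hv)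
    (fun w hw => by
      have hDw : D w = graphHom hP w - i w := by
        change D w = (⟨σ w, w⟩ : (N ⋊⁅leftDer hP⁆ G)) - i w
        simp [hD, hi]
      have := hvw w (by rw [← hDw]; exact hw)
      rw [hDw, this]; rfl)
  -- Right multiplication by `v` is a sum of three traceless operators.
  have hdec : P.flip v = P v - ad ℂ G v + A := by
    ext w
    have := hP.diff_eq v w
    simp only [LinearMap.flip_apply, LinearMap.add_apply, LinearMap.sub_apply, ad_apply]
    change _ = P v w - ⁅v, w⁆ + σ.symm ⁅σ v, σ w⁆
    have h : P w v = P v w - (⁅v, w⁆ - σ.symm ⁅σ v, σ w⁆) := by rw [← this]; abel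
    rw [h]; abel
  have t1 : LinearMap.trace ℂ G (P v) = 0 := by
    let _ := repRing P hP.rep
    have := repModule P hP.rep
    exact trace_toEnd_of_perfect (M := G) hGp v
  have t2 : LinearMap.trace ℂ G (ad ℂ G v) = 0 := trace_toEnd_of_perfect (M := G) hGp v
  have t3 : LinearMap.trace ℂ G A = 0 := by
    have h := LinearMap.trace_conj' (ad ℂ N (σ v)) σ.symm
    exact h.trans (trace_toEnd_of_perfect (M := N) hNp (σ v))
  rw [hdec, map_add, map_sub, t1, t2, t3, sub_zero, add_zero, eq_comm, neg_eq_zero, Nat.cast_eq_zero,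
    Submodule.finrank_eq_zero] at htr
  -- The radical vanishes, so the semidirect sum and its ideal `N` are semisimple.
  have hE0 : HasTrivialRadical ℂ (N ⋊⁅leftDer hP⁆ G) := by
    refine ⟨(LieSubmodule.eq_bot_iff _).2 fun x hx => ?_⟩
    have hx' : D (σ.symm x.left) = x := by
      rw [hD]
      ext <;> simp [hrad x hx]
    have : σ.symm x.left ∈ r := by
      change D _ ∈ radical ℂ (N ⋊⁅leftDer hP⁆ G)
      rwa [hx']
    rw [htr, Submodule.mem_bot] at this
    rw [← hx', this, map_zero]
  have hN0 : HasTrivialRadical ℂ N :=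
    hasTrivialRadical_of_ideal (SemiDirectSum.inl (leftDer hP)) (SemiDirectSum.inl_injective _)
      fun e x => ⟨⁅e.left, x⁆ + leftDer hP e.right x, by simp⟩
  exact hN_not_ss inferInstance
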